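/- arXiv:0903.0741 — 6 statements merged into one kernel-verified Lean document; each statement's English description precedes it below -/
import Mathlib

section
/- Suppose φ ∈ C²(ℝ) and ψ ∈ C¹(ℝ) satisfy conditions (I) and (II). Then there exists a classical solution u of the slit problem, and it satisfies u(x,t) = u_i(x,t) for every (x,t) ∈ D_i, i = 1,…,7. -/
/-!
With `f`, `g` the d'Alembert modes of the data, a right-moving characteristic that starts in the
window `(c₁ - ℓ, c₁)` hits the first slit and continues from the second, and vice versa for
`(c₂ - ℓ, c₂)`; so to the right of the slits the right-moving mode is the function `F` obtained
from `f` by exchanging its values over the two windows and adding constants. In the same way the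
left-moving mode to the left of the slits is a function `G` obtained from `g`. Conditions (I) say
that the constants can be chosen so that `F` and `G` are continuous, and conditions (II) that they
are then `C²` (`exists_mode`, resting on `joint_contDiff`).

The differences `F - f` and `G - g` are both `0` on the characteristic quadrants below the first
slit and above the second one, and both equal the same constant on the characteristic rectangle
spanned by the top of the first slit and the foot of the second. Hence the two waves
`F (x - t) + g (x + t)` and `f (x - t) + G (x + t)` coincide there. Take a curve `x = σ t` that
runs along both slits and passes from one to the other inside that rectangle; such a curve
exists because the segment joining the two ends is timelike (`exists_interface`). The
solution is the first wave to the right of the curve and the second one to its left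
(`splice`). Off the slits it is locally a d'Alembert sum of `C²` modes, which gives regularity and
the wave equation (`IsWaveAt.contDiffAt`, `IsWaveAt.wave`); the gluing conditions and the explicit
formulas are read off from the pieces of `F` and `G`.
-/

open Set Filter Topology MeasureTheory intervalIntegral

noncomputable section

/-- The closed vertical slit with foot `(A, B)` and length `ℓ`. -/
def slit (A B ℓ : ℝ) : Set (ℝ × ℝ) := {p : ℝ × ℝ | p.1 = A ∧ p.2 ∈ Set.Icc B (B + ℓ)}

/-- The open upper half plane minus the two closed slits. -/
def slitOmega (a₁ a₂ b₁ b₂ ℓ : ℝ) : Set (ℝ × ℝ) :=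
  {p : ℝ × ℝ | 0 < p.2} \ (slit a₁ b₁ ℓ ∪ slit a₂ b₂ ℓ)

/-- Partial derivative in the first (space) variable. -/
def uX (u : ℝ → ℝ → ℝ) (x t : ℝ) : ℝ := deriv (fun y => u y t) x

/-- Partial derivative in the second (time) variable. -/
def uT (u : ℝ → ℝ → ℝ) (x t : ℝ) : ℝ := deriv (fun s => u x s) t

/-- Second partial derivative in space. -/
def uXX (u : ℝ → ℝ → ℝ) (x t : ℝ) : ℝ := deriv (fun y => uX u y t) x

/-- Second partial derivative in time. -/
def uTT (u : ℝ → ℝ → ℝ) (x t : ℝ) : ℝ := deriv (fun s => uT u x s) t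

/-- A classical solution of the slit problem: `u ∈ C²(Ω) ∩ C¹(Ω ∪ {t = 0})`,
`u` satisfies the wave equation on `Ω`, takes the initial data `φ, ψ` at `t = 0`,
and for every `t ∈ (b₁, b₁+ℓ)` the one-sided limits of `u` and `u_x` at the two slits
exist and satisfy the gluing conditions. -/
structure IsClassicalSolution (a₁ a₂ b₁ b₂ ℓ : ℝ) (φ ψ : ℝ → ℝ) (u : ℝ → ℝ → ℝ) : Prop where
  smooth2 : ContDiffOn ℝ 2 (fun p : ℝ × ℝ => u p.1 p.2) (slitOmega a₁ a₂ b₁ b₂ ℓ)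
  smooth1 : ContDiffOn ℝ 1 (fun p : ℝ × ℝ => u p.1 p.2)
      (slitOmega a₁ a₂ b₁ b₂ ℓ ∪ {p : ℝ × ℝ | p.2 = 0})
  wave : ∀ p ∈ slitOmega a₁ a₂ b₁ b₂ ℓ, uTT u p.1 p.2 = uXX u p.1 p.2
  init_pos : ∀ x : ℝ, u x 0 = φ x
  init_vel : ∀ x : ℝ, uT u x 0 = ψ x
  glue : ∀ t ∈ Set.Ioo b₁ (b₁ + ℓ),
    (∃ L : ℝ, Filter.Tendsto (fun x => u x t) (𝓝[<] a₁) (𝓝 L) ∧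
       Filter.Tendsto (fun x => u x (t + (b₂ - b₁))) (𝓝[>] a₂) (𝓝 L)) ∧
    (∃ L : ℝ, Filter.Tendsto (fun x => u x t) (𝓝[>] a₁) (𝓝 L) ∧
       Filter.Tendsto (fun x => u x (t + (b₂ - b₁))) (𝓝[<] a₂) (𝓝 L)) ∧
    (∃ L : ℝ, Filter.Tendsto (fun x => uX u x t) (𝓝[<] a₁) (𝓝 L) ∧
       Filter.Tendsto (fun x => uX u x (t + (b₂ - b₁))) (𝓝[>] a₂) (𝓝 L)) ∧
    (∃ L : ℝ, Filter.Tendsto (fun x => uX u x t) (𝓝[>] a₁) (𝓝 L) ∧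
       Filter.Tendsto (fun x => uX u x (t + (b₂ - b₁))) (𝓝[<] a₂) (𝓝 L))

/-- Conditions (I) on the initial data. -/
def CondI (a₁ a₂ b₁ b₂ ℓ : ℝ) (φ ψ : ℝ → ℝ) : Prop :=
  (φ (a₂ - b₂ - ℓ) - φ (a₁ - b₁ - ℓ) + (∫ s in (a₂ - b₂ - ℓ)..(a₁ - b₁ - ℓ), ψ s)
      = φ (a₁ + b₁) - φ (a₂ + b₂) - ∫ s in (a₁ + b₁)..(a₂ + b₂), ψ s) ∧
  (φ (a₂ + b₂ + ℓ) - φ (a₁ + b₁ + ℓ) + (∫ s in (a₁ + b₁ + ℓ)..(a₂ + b₂ + ℓ), ψ s)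
      = φ (a₁ - b₁) - φ (a₂ - b₂) - ∫ s in (a₂ - b₂)..(a₁ - b₁), ψ s)

/-- Conditions (II) (smoothness on characteristics) on the initial data,
for `i = 1, 2`, with `ψ⁽⁰⁾ = ψ`. -/
def CondII (a₁ a₂ b₁ b₂ ℓ : ℝ) (φ ψ : ℝ → ℝ) : Prop :=
  (deriv φ (a₁ - b₁) - ψ (a₁ - b₁) = deriv φ (a₂ - b₂) - ψ (a₂ - b₂)) ∧
  (deriv φ (a₁ + b₁) + ψ (a₁ + b₁) = deriv φ (a₂ + b₂) + ψ (a₂ + b₂)) ∧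
  (deriv φ (a₁ - b₁ - ℓ) - ψ (a₁ - b₁ - ℓ) = deriv φ (a₂ - b₂ - ℓ) - ψ (a₂ - b₂ - ℓ)) ∧
  (deriv φ (a₁ + b₁ + ℓ) + ψ (a₁ + b₁ + ℓ) = deriv φ (a₂ + b₂ + ℓ) + ψ (a₂ + b₂ + ℓ)) ∧
  (deriv (deriv φ) (a₁ - b₁) - deriv ψ (a₁ - b₁)
      = deriv (deriv φ) (a₂ - b₂) - deriv ψ (a₂ - b₂)) ∧
  (deriv (deriv φ) (a₁ + b₁) + deriv ψ (a₁ + b₁)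
      = deriv (deriv φ) (a₂ + b₂) + deriv ψ (a₂ + b₂)) ∧
  (deriv (deriv φ) (a₁ - b₁ - ℓ) - deriv ψ (a₁ - b₁ - ℓ)
      = deriv (deriv φ) (a₂ - b₂ - ℓ) - deriv ψ (a₂ - b₂ - ℓ)) ∧
  (deriv (deriv φ) (a₁ + b₁ + ℓ) + deriv ψ (a₁ + b₁ + ℓ)
      = deriv (deriv φ) (a₂ + b₂ + ℓ) + deriv ψ (a₂ + b₂ + ℓ))

/-- The right-moving d'Alembert mode `f(x) = ½(φ(x) − ∫_{x₀}^x ψ)`. -/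
def fFn (φ ψ : ℝ → ℝ) (x₀ x : ℝ) : ℝ := (φ x - ∫ s in x₀..x, ψ s) / 2

/-- The left-moving d'Alembert mode `g(x) = ½(φ(x) + ∫_{x₀}^x ψ)`. -/
def gFn (φ ψ : ℝ → ℝ) (x₀ x : ℝ) : ℝ := (φ x + ∫ s in x₀..x, ψ s) / 2

/-- The explicit formulas `u = u_i` on the seven domains `D₁, …, D₇`
(with `η = x − t`, `ξ = x + t`, `c = a − b`, `d = a + b`). -/
def DomainFormulae (a₁ a₂ b₁ b₂ ℓ x₀ : ℝ) (φ ψ : ℝ → ℝ) (u : ℝ → ℝ → ℝ) : Prop :=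
  (∀ x t : ℝ, a₁ < x → a₁ - b₁ - ℓ < x - t → x - t < a₁ - b₁ →
    u x t = fFn φ ψ x₀ (x - t + ((a₂ - a₁) - (b₂ - b₁))) + gFn φ ψ x₀ (x + t)
      + fFn φ ψ x₀ (a₁ - b₁) - fFn φ ψ x₀ (a₂ - b₂)) ∧
  (∀ x t : ℝ, a₂ < x → a₂ - b₂ - ℓ < x - t → x - t < a₂ - b₂ →
    u x t = fFn φ ψ x₀ (x - t - ((a₂ - a₁) - (b₂ - b₁))) + gFn φ ψ x₀ (x + t)
      + gFn φ ψ x₀ (a₁ + b₁) - gFn φ ψ x₀ (a₂ + b₂)) ∧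
  (∀ x t : ℝ, x < a₁ → a₁ + b₁ < x + t → x + t < a₁ + b₁ + ℓ →
    u x t = fFn φ ψ x₀ (x - t) + gFn φ ψ x₀ (x + t + ((a₂ - a₁) + (b₂ - b₁)))
      + gFn φ ψ x₀ (a₁ + b₁) - gFn φ ψ x₀ (a₂ + b₂)) ∧
  (∀ x t : ℝ, x < a₂ → a₂ + b₂ < x + t → x + t < a₂ + b₂ + ℓ →
    u x t = fFn φ ψ x₀ (x - t) + gFn φ ψ x₀ (x + t - ((a₂ - a₁) + (b₂ - b₁)))
      + fFn φ ψ x₀ (a₁ - b₁) - fFn φ ψ x₀ (a₂ - b₂)) ∧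
  (∀ x t : ℝ, 0 < t → t < |x - a₁| + b₁ →
    u x t = fFn φ ψ x₀ (x - t) + gFn φ ψ x₀ (x + t)) ∧
  (∀ x t : ℝ, |x - a₁| + b₁ + ℓ < t → t < |x - a₂| + b₂ →
    u x t = fFn φ ψ x₀ (x - t) + gFn φ ψ x₀ (x + t)
      + gFn φ ψ x₀ (a₁ + b₁) - gFn φ ψ x₀ (a₂ + b₂)
      + fFn φ ψ x₀ (a₁ - b₁) - fFn φ ψ x₀ (a₂ - b₂)) ∧
  (∀ x t : ℝ, |x - a₂| + b₂ + ℓ < t →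
    u x t = fFn φ ψ x₀ (x - t) + gFn φ ψ x₀ (x + t))

/-! ### Joining functions of one variable -/

/-- The function equal to `p` on `(-∞, k]` and to `q` on `(k, ∞)`. -/
def joint (k : ℝ) (p q : ℝ → ℝ) (x : ℝ) : ℝ := if x ≤ k then p x else q x

/-- `p` and `q` agree at `k` together with their first two derivatives. -/
def Contact (k : ℝ) (p q : ℝ → ℝ) : Prop :=
  p k = q k ∧ deriv p k = deriv q k ∧ deriv (deriv p) k = deriv (deriv q) k

/-- The translate `x ↦ p (x + s) + K`. -/
def shifted (p : ℝ → ℝ) (s K : ℝ) (x : ℝ) : ℝ := p (x + s) + K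

/-- The piecewise function with consecutive pieces `p₁, …, p₅` and breakpoints `k₁, …, k₄`. -/
def five (k₁ k₂ k₃ k₄ : ℝ) (p₁ p₂ p₃ p₄ p₅ : ℝ → ℝ) : ℝ → ℝ :=
  joint k₁ p₁ (joint k₂ p₂ (joint k₃ p₃ (joint k₄ p₄ p₅)))

theorem joint_hasDerivAt {k : ℝ} {p q : ℝ → ℝ} (hp : Differentiable ℝ p)
    (hq : Differentiable ℝ q) (h0 : p k = q k) (h1 : deriv p k = deriv q k) (x : ℝ) :
    HasDerivAt (joint k p q) (joint k (deriv p) (deriv q) x) x := by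
  rcases lt_trichotomy x k with h | h | h
  · have e : joint k p q =ᶠ[𝓝 x] p := by
      filter_upwards [Iio_mem_nhds h] with y hy
      exact if_pos (le_of_lt hy)
    have e2 : joint k (deriv p) (deriv q) x = deriv p x := if_pos h.le
    rw [e2]
    exact (hp x).hasDerivAt.congr_of_eventuallyEq e
  · subst h
    have e2 : joint x (deriv p) (deriv q) x = deriv p x := if_pos le_rfl
    rw [e2]
    have hl : HasDerivWithinAt (joint x p q) (deriv p x) (Iic x) x :=
      (hp x).hasDerivAt.hasDerivWithinAt.congr (fun y hy => if_pos hy) (if_pos le_rfl)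
    have hr : HasDerivWithinAt (joint x p q) (deriv p x) (Ici x) x := by
      rw [h1]
      have key : ∀ y ∈ Ici x, joint x p q y = q y := by
        intro y hy
        rcases eq_or_lt_of_le (show x ≤ y from hy) with h | h
        · subst h
          simp [joint, h0]
        · exact if_neg (not_le.mpr h)
      exact (hq x).hasDerivAt.hasDerivWithinAt.congr key (key x self_mem_Ici)
    have := hl.union hr
    rwa [Iic_union_Ici, hasDerivWithinAt_univ] at this
  · have e : joint k p q =ᶠ[𝓝 x] q := by
      filter_upwards [Ioi_mem_nhds h] with y hy
      exact if_neg (not_le.mpr hy)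
    have e2 : joint k (deriv p) (deriv q) x = deriv q x := if_neg (not_le.mpr h)
    rw [e2]
    exact (hq x).hasDerivAt.congr_of_eventuallyEq e

theorem contDiff_two_iff (p : ℝ → ℝ) : ContDiff ℝ 2 p ↔
    Differentiable ℝ p ∧ Differentiable ℝ (deriv p) ∧ Continuous (deriv (deriv p)) := by
  rw [show (2 : WithTop ℕ∞) = 1 + 1 by norm_num, contDiff_succ_iff_deriv, contDiff_one_iff_deriv]
  simp

/-- Two `C²` functions in second-order contact at `k` join to a `C²` function. -/
theorem joint_contDiff {k : ℝ} {p q : ℝ → ℝ} (hp : ContDiff ℝ 2 p) (hq : ContDiff ℝ 2 q)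
    (h : Contact k p q) : ContDiff ℝ 2 (joint k p q) := by
  rw [contDiff_two_iff] at hp hq ⊢
  obtain ⟨h0, h1, h2⟩ := h
  have d1 := joint_hasDerivAt hp.1 hq.1 h0 h1
  have d2 := joint_hasDerivAt hp.2.1 hq.2.1 h1 h2
  have e1 : deriv (joint k p q) = joint k (deriv p) (deriv q) := funext fun x => (d1 x).deriv
  have e2 : deriv (joint k (deriv p) (deriv q)) = joint k (deriv (deriv p)) (deriv (deriv q)) :=
    funext fun x => (d2 x).deriv
  refine ⟨fun x => (d1 x).differentiableAt, ?_, ?_⟩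
  · rw [e1]
    exact fun x => (d2 x).differentiableAt
  · rw [e1, e2]
    exact Continuous.if_le hp.2.2 hq.2.2 continuous_id continuous_const
      (fun x hx => by subst hx; exact h2)

/-- Contact at `k` only sees the first piece of a joint whose breakpoint lies to the right. -/
theorem Contact.joint_right {k m : ℝ} {p q r : ℝ → ℝ} (hkm : k < m) (h : Contact k p q) :
    Contact k p (joint m q r) := by
  have e : joint m q r =ᶠ[𝓝 k] q := by
    filter_upwards [Iio_mem_nhds hkm] with y hy
    exact if_pos (le_of_lt hy)
  obtain ⟨h0, h1, h2⟩ := h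
  exact ⟨by rw [e.eq_of_nhds, h0], by rw [e.deriv_eq, h1], by rw [e.deriv.deriv_eq, h2]⟩

theorem five_contDiff {k₁ k₂ k₃ k₄ : ℝ} {p₁ p₂ p₃ p₄ p₅ : ℝ → ℝ}
    (h12 : k₁ < k₂) (h23 : k₂ < k₃) (h34 : k₃ < k₄)
    (hp₁ : ContDiff ℝ 2 p₁) (hp₂ : ContDiff ℝ 2 p₂) (hp₃ : ContDiff ℝ 2 p₃)
    (hp₄ : ContDiff ℝ 2 p₄) (hp₅ : ContDiff ℝ 2 p₅)
    (c₁ : Contact k₁ p₁ p₂) (c₂ : Contact k₂ p₂ p₃) (c₃ : Contact k₃ p₃ p₄)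
    (c₄ : Contact k₄ p₄ p₅) : ContDiff ℝ 2 (five k₁ k₂ k₃ k₄ p₁ p₂ p₃ p₄ p₅) :=
  joint_contDiff hp₁ (joint_contDiff hp₂ (joint_contDiff hp₃ (joint_contDiff hp₄ hp₅ c₄)
    (c₃.joint_right h34)) (c₂.joint_right h23)) (c₁.joint_right h12)

section FiveValues

variable {k₁ k₂ k₃ k₄ : ℝ} (p₁ p₂ p₃ p₄ p₅ : ℝ → ℝ) {x : ℝ}

theorem five_val1 (h : x < k₁) : five k₁ k₂ k₃ k₄ p₁ p₂ p₃ p₄ p₅ x = p₁ x :=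
  if_pos h.le

theorem five_val2 (h : k₁ < x) (h' : x < k₂) :
    five k₁ k₂ k₃ k₄ p₁ p₂ p₃ p₄ p₅ x = p₂ x := by
  simp [five, joint, h.not_ge, h'.le]

theorem five_val3 (h12 : k₁ < k₂) (h : k₂ < x) (h' : x < k₃) :
    five k₁ k₂ k₃ k₄ p₁ p₂ p₃ p₄ p₅ x = p₃ x := by
  simp [five, joint, h.not_ge, h'.le, (h12.trans h).not_ge]

theorem five_val4 (h12 : k₁ < k₂) (h23 : k₂ < k₃) (h : k₃ < x) (h' : x < k₄) :
    five k₁ k₂ k₃ k₄ p₁ p₂ p₃ p₄ p₅ x = p₄ x := by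
  simp [five, joint, h.not_ge, h'.le, (h23.trans h).not_ge, (h12.trans (h23.trans h)).not_ge]

theorem five_val5 (h12 : k₁ < k₂) (h23 : k₂ < k₃) (h34 : k₃ < k₄) (h : k₄ < x) :
    five k₁ k₂ k₃ k₄ p₁ p₂ p₃ p₄ p₅ x = p₅ x := by
  simp [five, joint, h.not_ge, (h34.trans h).not_ge, (h23.trans (h34.trans h)).not_ge,
    (h12.trans (h23.trans (h34.trans h))).not_ge]

end FiveValues

theorem shifted_contDiff {p : ℝ → ℝ} (hp : ContDiff ℝ 2 p) (s K : ℝ) :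
    ContDiff ℝ 2 (shifted p s K) := by
  unfold shifted
  fun_prop

theorem deriv_shifted (p : ℝ → ℝ) (s K : ℝ) : deriv (shifted p s K) = shifted (deriv p) s 0 := by
  funext x
  have h : deriv (fun x => p (x + s) + K) x = deriv p (x + s) + 0 := by
    rw [deriv_add_const, deriv_comp_add_const, add_zero]
  exact h

theorem shifted_contact {p : ℝ → ℝ} {k s K s' K' y y' : ℝ} (hy : k + s = y) (hy' : k + s' = y')
    (h0 : p y + K = p y' + K') (h1 : deriv p y = deriv p y')
    (h2 : deriv (deriv p) y = deriv (deriv p) y') :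
    Contact k (shifted p s K) (shifted p s' K') := by
  subst hy hy'
  refine ⟨h0, ?_, ?_⟩
  · simp [deriv_shifted, shifted, h1]
  · simp [deriv_shifted, shifted, h2]

/-- The transported mode: `p` with the values over the windows `(k₁, k₂)` and
`(k₃, k₄) = (k₁, k₂) + s` exchanged, corrected by constants so that it stays continuous. Since the
pieces on either side of a breakpoint are translates of `p` read off at corresponding window
ends, agreement of `p'` and `p''` at those ends makes the result `C²`. The values at the
breakpoints themselves play no role. -/
theorem exists_mode {p : ℝ → ℝ} (hp : ContDiff ℝ 2 p) {k₁ k₂ k₃ k₄ s A B : ℝ}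
    (h12 : k₁ < k₂) (h23 : k₂ < k₃) (h34 : k₃ < k₄) (hs : k₁ + s = k₃) (hs' : k₂ + s = k₄)
    (hA : p k₁ = p k₃ + A) (hA' : p k₂ + B = p k₄)
    (d1 : deriv p k₁ = deriv p k₃) (d2 : deriv p k₂ = deriv p k₄)
    (e1 : deriv (deriv p) k₁ = deriv (deriv p) k₃)
    (e2 : deriv (deriv p) k₂ = deriv (deriv p) k₄) :
    ∃ F : ℝ → ℝ, ContDiff ℝ 2 F ∧ (∀ x, x < k₁ → F x = p x) ∧
      (∀ x, k₁ < x → x < k₂ → F x = p (x + s) + A) ∧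
      (∀ x, k₂ < x → x < k₃ → F x = p x + (A + B)) ∧
      (∀ x, k₃ < x → x < k₄ → F x = p (x - s) + B) ∧
      (∀ x, k₄ < x → F x = p x) := by
  refine ⟨five k₁ k₂ k₃ k₄ (shifted p 0 0) (shifted p s A) (shifted p 0 (A + B))
    (shifted p (-s) B) (shifted p 0 0), ?_, ?_, ?_, ?_, ?_, ?_⟩
  · refine five_contDiff h12 h23 h34 (shifted_contDiff hp _ _) (shifted_contDiff hp _ _)
      (shifted_contDiff hp _ _) (shifted_contDiff hp _ _) (shifted_contDiff hp _ _) ?_ ?_ ?_ ?_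
    · exact shifted_contact (y := k₁) (y' := k₃) (by ring) hs (by linarith) d1 e1
    · exact shifted_contact (y := k₄) (y' := k₂) hs' (by ring) (by linarith) d2.symm e2.symm
    · exact shifted_contact (y := k₃) (y' := k₁) (by ring) (by linarith) (by linarith)
        d1.symm e1.symm
    · exact shifted_contact (y := k₂) (y' := k₄) (by linarith) (by ring) (by linarith) d2 e2
  · intro x h
    rw [five_val1 _ _ _ _ _ h]
    simp [shifted]
  · intro x h h'
    rw [five_val2 _ _ _ _ _ h h']
    rfl
  · intro x h h'
    rw [five_val3 _ _ _ _ _ h12 h h']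
    simp [shifted]
  · intro x h h'
    rw [five_val4 _ _ _ _ _ h12 h23 h h']
    simp [shifted, sub_eq_add_neg]
  · intro x h
    rw [five_val5 _ _ _ _ _ h12 h23 h34 h]
    simp [shifted]

/-! ### The d'Alembert modes of the initial data -/

theorem hasDerivAt_prim {ψ : ℝ → ℝ} (hψ : ContDiff ℝ 1 ψ) (x₀ x : ℝ) :
    HasDerivAt (fun x => ∫ s in x₀..x, ψ s) (ψ x) x :=
  integral_hasDerivAt_right (hψ.continuous.intervalIntegrable _ _)
    (hψ.continuous.stronglyMeasurableAtFilter _ _) hψ.continuous.continuousAt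

/-- Reversing the sign of the initial velocity exchanges the two modes. -/
theorem gFn_eq (φ ψ : ℝ → ℝ) (x₀ : ℝ) : gFn φ ψ x₀ = fFn φ (fun s => -ψ s) x₀ := by
  funext x
  simp [gFn, fFn]

theorem fFn_deriv {φ ψ : ℝ → ℝ} (hφ : ContDiff ℝ 2 φ) (hψ : ContDiff ℝ 1 ψ) (x₀ : ℝ) :
    deriv (fFn φ ψ x₀) = fun x => (deriv φ x - ψ x) / 2 := by
  funext x
  have h := ((contDiff_two_iff φ).1 hφ).1 x |>.hasDerivAt
  exact ((h.sub (hasDerivAt_prim hψ x₀ x)).div_const 2).deriv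

theorem fFn_deriv_deriv {φ ψ : ℝ → ℝ} (hφ : ContDiff ℝ 2 φ) (hψ : ContDiff ℝ 1 ψ) (x₀ x : ℝ) :
    deriv (deriv (fFn φ ψ x₀)) x = (deriv (deriv φ) x - deriv ψ x) / 2 := by
  rw [fFn_deriv hφ hψ]
  have h := ((contDiff_two_iff φ).1 hφ).2.1 x |>.hasDerivAt
  have h' := (contDiff_one_iff_deriv.1 hψ).1 x |>.hasDerivAt
  exact ((h.sub h').div_const 2).deriv

theorem fFn_contDiff {φ ψ : ℝ → ℝ} (hφ : ContDiff ℝ 2 φ) (hψ : ContDiff ℝ 1 ψ) (x₀ : ℝ) :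
    ContDiff ℝ 2 (fFn φ ψ x₀) := by
  have hφ' := (contDiff_two_iff φ).1 hφ
  have hψ' := contDiff_one_iff_deriv.1 hψ
  refine (contDiff_two_iff _).2 ⟨fun x => ?_, ?_, ?_⟩
  · exact (((hφ'.1 x).hasDerivAt.sub (hasDerivAt_prim hψ x₀ x)).div_const 2).differentiableAt
  · rw [fFn_deriv hφ hψ]
    exact (hφ'.2.1.sub hψ'.1).div_const 2
  · rw [funext (fFn_deriv_deriv hφ hψ x₀)]
    exact (hφ'.2.2.sub hψ'.2).div_const 2

theorem fFn_sub {φ ψ : ℝ → ℝ} (hψ : ContDiff ℝ 1 ψ) (x₀ x y : ℝ) :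
    fFn φ ψ x₀ x - fFn φ ψ x₀ y = (φ x - φ y - ∫ s in y..x, ψ s) / 2 := by
  have h := integral_interval_sub_left (hψ.continuous.intervalIntegrable x₀ x (μ := volume))
    (hψ.continuous.intervalIntegrable x₀ y)
  simp only [fFn]
  linarith

theorem gFn_sub {φ ψ : ℝ → ℝ} (hψ : ContDiff ℝ 1 ψ) (x₀ x y : ℝ) :
    gFn φ ψ x₀ x - gFn φ ψ x₀ y = (φ x - φ y + ∫ s in y..x, ψ s) / 2 := by
  have h := integral_interval_sub_left (hψ.continuous.intervalIntegrable x₀ x (μ := volume))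
    (hψ.continuous.intervalIntegrable x₀ y)
  simp only [gFn]
  linarith

/-! ### Local d'Alembert sums -/

/-- Near `p`, `u` is a d'Alembert sum `P (x - t) + Q (x + t)` with `C²` modes. -/
def IsWaveAt (u : ℝ → ℝ → ℝ) (p : ℝ × ℝ) : Prop :=
  ∃ P Q : ℝ → ℝ, ContDiff ℝ 2 P ∧ ContDiff ℝ 2 Q ∧
    (fun q : ℝ × ℝ => u q.1 q.2) =ᶠ[𝓝 p] fun q => P (q.1 - q.2) + Q (q.1 + q.2)

theorem IsWaveAt.contDiffAt {u : ℝ → ℝ → ℝ} {p : ℝ × ℝ} (h : IsWaveAt u p) :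
    ContDiffAt ℝ 2 (fun q : ℝ × ℝ => u q.1 q.2) p := by
  obtain ⟨P, Q, hP, hQ, e⟩ := h
  refine ContDiffAt.congr_of_eventuallyEq ?_ e
  have : ContDiff ℝ 2 fun q : ℝ × ℝ => P (q.1 - q.2) + Q (q.1 + q.2) := by fun_prop
  exact this.contDiffAt

theorem hasDerivAt_x {P Q : ℝ → ℝ} (hP : Differentiable ℝ P) (hQ : Differentiable ℝ Q) (x t : ℝ) :
    HasDerivAt (fun y => P (y - t) + Q (y + t)) (deriv P (x - t) + deriv Q (x + t)) x :=
  ((hP (x - t)).hasDerivAt.comp_sub_const x t).add ((hQ (x + t)).hasDerivAt.comp_add_const x t)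

theorem hasDerivAt_t {P Q : ℝ → ℝ} (hP : Differentiable ℝ P) (hQ : Differentiable ℝ Q) (x t : ℝ) :
    HasDerivAt (fun s => P (x - s) + Q (x + s)) (-deriv P (x - t) + deriv Q (x + t)) t :=
  ((hP (x - t)).hasDerivAt.comp_const_sub x t).add ((hQ (x + t)).hasDerivAt.comp_const_add x t)

theorem eventually_slice_x {R : ℝ × ℝ → Prop} {x t : ℝ} (h : ∀ᶠ q in 𝓝 (x, t), R q) :
    ∀ᶠ y in 𝓝 x, R (y, t) :=
  (show Continuous fun y : ℝ => (y, t) by fun_prop).continuousAt.eventually h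

theorem eventually_slice_t {R : ℝ × ℝ → Prop} {x t : ℝ} (h : ∀ᶠ q in 𝓝 (x, t), R q) :
    ∀ᶠ s in 𝓝 t, R (x, s) :=
  (show Continuous fun s : ℝ => (x, s) by fun_prop).continuousAt.eventually h

theorem uX_of_eventuallyEq {u : ℝ → ℝ → ℝ} {P Q : ℝ → ℝ} {x t : ℝ} (hP : Differentiable ℝ P)
    (hQ : Differentiable ℝ Q)
    (e : (fun q : ℝ × ℝ => u q.1 q.2) =ᶠ[𝓝 (x, t)] fun q => P (q.1 - q.2) + Q (q.1 + q.2)) :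
    uX u x t = deriv P (x - t) + deriv Q (x + t) :=
  ((hasDerivAt_x hP hQ x t).congr_of_eventuallyEq (eventually_slice_x e)).deriv

theorem uT_of_eventuallyEq {u : ℝ → ℝ → ℝ} {P Q : ℝ → ℝ} {x t : ℝ} (hP : Differentiable ℝ P)
    (hQ : Differentiable ℝ Q)
    (e : (fun q : ℝ × ℝ => u q.1 q.2) =ᶠ[𝓝 (x, t)] fun q => P (q.1 - q.2) + Q (q.1 + q.2)) :
    uT u x t = -deriv P (x - t) + deriv Q (x + t) :=
  ((hasDerivAt_t hP hQ x t).congr_of_eventuallyEq (eventually_slice_t e)).deriv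

theorem IsWaveAt.wave {u : ℝ → ℝ → ℝ} {p : ℝ × ℝ} (h : IsWaveAt u p) :
    uTT u p.1 p.2 = uXX u p.1 p.2 := by
  obtain ⟨x, t⟩ := p
  obtain ⟨P, Q, hP, hQ, e⟩ := h
  rw [contDiff_two_iff] at hP hQ
  have ex : (fun y => uX u y t) =ᶠ[𝓝 x] fun y => deriv P (y - t) + deriv Q (y + t) := by
    filter_upwards [eventually_slice_x e.eventually_nhds] with y hy
    exact uX_of_eventuallyEq hP.1 hQ.1 hy
  have et : (fun s => uT u x s) =ᶠ[𝓝 t] fun s => -deriv P (x - s) + deriv Q (x + s) := by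
    filter_upwards [eventually_slice_t e.eventually_nhds] with s hs
    exact uT_of_eventuallyEq hP.1 hQ.1 hs
  have h1 := ((hasDerivAt_x hP.2.1 hQ.2.1 x t).congr_of_eventuallyEq ex).deriv
  have h2 := ((hasDerivAt_t (P := fun y => -deriv P y) hP.2.1.neg hQ.2.1 x
    t).congr_of_eventuallyEq et).deriv
  have h3 : deriv (fun y => -deriv P y) (x - t) = -deriv (deriv P) (x - t) := deriv.fun_neg
  simp only [uTT, uXX]
  rw [h1, h2, h3, neg_neg]

/-! ### Splicing two waves along a curve -/

/-- The function given by the modes `F, g` to the right of the curve `x = σ t`, and by the modes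
`f, G` on and to the left of it. -/
def splice (σ f F g G : ℝ → ℝ) (x t : ℝ) : ℝ :=
  if σ t < x then F (x - t) + g (x + t) else f (x - t) + G (x + t)

section Splice

variable {σ f F g G : ℝ → ℝ} {x t : ℝ}

theorem splice_right (h : σ t < x) : splice σ f F g G x t = F (x - t) + g (x + t) := if_pos h

theorem splice_left (h : x < σ t) : splice σ f F g G x t = f (x - t) + G (x + t) :=
  if_neg h.not_gt

theorem splice_eventually_right (hσ : Continuous σ) (h : σ t < x) :
    (fun q : ℝ × ℝ => splice σ f F g G q.1 q.2) =ᶠ[𝓝 (x, t)]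
      fun q => F (q.1 - q.2) + g (q.1 + q.2) := by
  have ho : IsOpen {q : ℝ × ℝ | σ q.2 < q.1} := isOpen_lt (by fun_prop) (by fun_prop)
  filter_upwards [ho.mem_nhds h] with q hq
  exact if_pos hq

theorem splice_eventually_left (hσ : Continuous σ) (h : x < σ t) :
    (fun q : ℝ × ℝ => splice σ f F g G q.1 q.2) =ᶠ[𝓝 (x, t)]
      fun q => f (q.1 - q.2) + G (q.1 + q.2) := by
  have ho : IsOpen {q : ℝ × ℝ | q.1 < σ q.2} := isOpen_lt (by fun_prop) (by fun_prop)
  filter_upwards [ho.mem_nhds h] with q hq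
  exact if_neg (not_lt.mpr (le_of_lt hq))

/-- In a rectangle of characteristic coordinates on which both mode corrections equal the same
constant `κ`, the two sides of the splice agree, wherever the curve runs. -/
theorem splice_eventually_diamond {m M n N κ : ℝ} (hF : ∀ y, m < y → y < M → F y = f y + κ)
    (hG : ∀ y, n < y → y < N → G y = g y + κ) (h1 : m < x - t) (h2 : x - t < M)
    (h3 : n < x + t) (h4 : x + t < N) :
    (fun q : ℝ × ℝ => splice σ f F g G q.1 q.2) =ᶠ[𝓝 (x, t)]
      fun q => f (q.1 - q.2) + (g (q.1 + q.2) + κ) := by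
  have c1 : ContinuousAt (fun q : ℝ × ℝ => q.1 - q.2) (x, t) := by fun_prop
  have c2 : ContinuousAt (fun q : ℝ × ℝ => q.1 + q.2) (x, t) := by fun_prop
  filter_upwards [c1.eventually (Ioo_mem_nhds h1 h2), c2.eventually (Ioo_mem_nhds h3 h4)]
    with q hq1 hq2
  simp only [splice]
  split_ifs
  · rw [hF _ hq1.1 hq1.2]
    ring
  · rw [hG _ hq2.1 hq2.2]

theorem splice_tendsto_right (hF : Continuous F) (hg : Continuous g) (h : σ t = x) :
    Tendsto (fun y => splice σ f F g G y t) (𝓝[>] x) (𝓝 (F (x - t) + g (x + t))) := by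
  have hc : Continuous fun y => F (y - t) + g (y + t) := by fun_prop
  refine ((hc.tendsto x).mono_left nhdsWithin_le_nhds).congr' ?_
  filter_upwards [self_mem_nhdsWithin] with y hy
  exact (splice_right (by rw [h]; exact hy)).symm

theorem splice_tendsto_left (hf : Continuous f) (hG : Continuous G) (h : σ t = x) :
    Tendsto (fun y => splice σ f F g G y t) (𝓝[<] x) (𝓝 (f (x - t) + G (x + t))) := by
  have hc : Continuous fun y => f (y - t) + G (y + t) := by fun_prop
  refine ((hc.tendsto x).mono_left nhdsWithin_le_nhds).congr' ?_
  filter_upwards [self_mem_nhdsWithin] with y hy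
  exact (splice_left (by rw [h]; exact hy)).symm

theorem uX_splice_tendsto_right (hσ : Continuous σ) (hF : ContDiff ℝ 2 F) (hg : ContDiff ℝ 2 g)
    (h : σ t = x) :
    Tendsto (fun y => uX (splice σ f F g G) y t) (𝓝[>] x)
      (𝓝 (deriv F (x - t) + deriv g (x + t))) := by
  rw [contDiff_two_iff] at hF hg
  have h1 := hF.2.1.continuous
  have h2 := hg.2.1.continuous
  have hc : Continuous fun y => deriv F (y - t) + deriv g (y + t) := by fun_prop
  refine ((hc.tendsto x).mono_left nhdsWithin_le_nhds).congr' ?_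
  filter_upwards [self_mem_nhdsWithin] with y hy
  exact (uX_of_eventuallyEq hF.1 hg.1
    (splice_eventually_right hσ (by rw [h]; exact hy))).symm

theorem uX_splice_tendsto_left (hσ : Continuous σ) (hf : ContDiff ℝ 2 f) (hG : ContDiff ℝ 2 G)
    (h : σ t = x) :
    Tendsto (fun y => uX (splice σ f F g G) y t) (𝓝[<] x)
      (𝓝 (deriv f (x - t) + deriv G (x + t))) := by
  rw [contDiff_two_iff] at hf hG
  have h1 := hf.2.1.continuous
  have h2 := hG.2.1.continuous
  have hc : Continuous fun y => deriv f (y - t) + deriv G (y + t) := by fun_prop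
  refine ((hc.tendsto x).mono_left nhdsWithin_le_nhds).congr' ?_
  filter_upwards [self_mem_nhdsWithin] with y hy
  exact (uX_of_eventuallyEq hf.1 hG.1
    (splice_eventually_left hσ (by rw [h]; exact hy))).symm

end Splice

/-! ### The curve joining the slits -/

/-- A curve `x = σ t` running up the line of the first slit to its top `(a₁, s)`, then straight to
the foot `(a₂, e)` of the second slit, then up its line. Its oblique part is timelike because
`a₂ - a₁ < e - s`, hence stays in the open characteristic rectangle spanned by its endpoints. -/
theorem exists_interface {a₁ a₂ s e : ℝ} (ha : a₁ < a₂) (h : s + (a₂ - a₁) < e) :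
    ∃ σ : ℝ → ℝ, Continuous σ ∧ (∀ t, t ≤ s → σ t = a₁) ∧ (∀ t, e ≤ t → σ t = a₂) ∧
      (∀ t, a₁ ≤ σ t ∧ σ t ≤ a₂) ∧
      ∀ t, s < t → t < e → a₂ - e < σ t - t ∧ σ t - t < a₁ - s ∧ a₁ + s < σ t + t ∧
        σ t + t < a₂ + e := by
  have hes : 0 < e - s := by linarith
  obtain ⟨k, hk⟩ : ∃ k, k = (a₂ - a₁) / (e - s) := ⟨_, rfl⟩
  have hk0 : 0 < k := by rw [hk]; exact div_pos (by linarith) hes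
  have hk1 : k < 1 := by rw [hk, div_lt_one hes]; linarith
  have hke : k * (e - s) = a₂ - a₁ := by rw [hk]; field_simp
  have hm : ∀ t, s < t → t < e → max 0 (min (e - s) (t - s)) = t - s := by
    intro t h1 h2
    rw [min_eq_right (by linarith), max_eq_right (by linarith)]
  refine ⟨fun t => a₁ + k * max 0 (min (e - s) (t - s)), by fun_prop, ?_, ?_, ?_, ?_⟩
  · intro t ht
    have : max 0 (min (e - s) (t - s)) = 0 :=
      max_eq_left ((min_le_right _ _).trans (by linarith))
    simp [this]
  · intro t ht
    have : max 0 (min (e - s) (t - s)) = e - s := by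
      rw [min_eq_left (by linarith), max_eq_right hes.le]
    simp only [this]
    linarith
  · intro t
    have h1 : 0 ≤ max 0 (min (e - s) (t - s)) := le_max_left _ _
    have h2 : max 0 (min (e - s) (t - s)) ≤ e - s := max_le hes.le (min_le_left _ _)
    constructor <;> nlinarith
  · intro t h1 h2
    simp only [hm t h1 h2]
    refine ⟨?_, ?_, ?_, ?_⟩ <;> nlinarith

/-- Functions that agree on an open interval up to translation and a constant have equal
derivatives there. -/
theorem deriv_of_eq_shifted {p F : ℝ → ℝ} {m M s K x : ℝ}
    (h : ∀ y, m < y → y < M → F y = p (y + s) + K) (h1 : m < x) (h2 : x < M) :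
    deriv F x = deriv p (x + s) := by
  have e : F =ᶠ[𝓝 x] shifted p s K := by
    filter_upwards [Ioo_mem_nhds h1 h2] with y hy
    exact h y hy.1 hy.2
  rw [e.deriv_eq, deriv_shifted]
  simp [shifted]

/-- If `φ ∈ C²(ℝ)` and `ψ ∈ C¹(ℝ)` satisfy conditions (I) and (II),
then there exists a classical solution `u` of the slit problem and it is given by the
explicit formulas `u = u_i` on the domains `D_i`, `i = 1, …, 7`. -/
theorem wave_slit_existence (a₁ a₂ b₁ b₂ ℓ x₀ : ℝ)
    (hℓ : 0 < ℓ) (hb₁ : 0 < b₁) (ha : a₁ < a₂) (hb : b₁ + ℓ + a₂ - a₁ < b₂)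
    (φ ψ : ℝ → ℝ) (hφ : ContDiff ℝ 2 φ) (hψ : ContDiff ℝ 1 ψ)
    (hI : CondI a₁ a₂ b₁ b₂ ℓ φ ψ) (hII : CondII a₁ a₂ b₁ b₂ ℓ φ ψ) :
    ∃ u : ℝ → ℝ → ℝ, IsClassicalSolution a₁ a₂ b₁ b₂ ℓ φ ψ u ∧
      DomainFormulae a₁ a₂ b₁ b₂ ℓ x₀ φ ψ u := by
  obtain ⟨I1, I2⟩ := hI
  obtain ⟨D1, D2, D3, D4, E1, E2, E3, E4⟩ := hII
  have hψn : ContDiff ℝ 1 (fun s => -ψ s) := hψ.neg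
  have hf := fFn_contDiff hφ hψ x₀
  have hg := fFn_contDiff hφ hψn x₀
  have hfd : ∀ x, deriv (fFn φ ψ x₀) x = (deriv φ x - ψ x) / 2 :=
    fun x => congrFun (fFn_deriv hφ hψ x₀) x
  have hfdd := fFn_deriv_deriv hφ hψ x₀
  have hgd : ∀ x, deriv (fFn φ (fun s => -ψ s) x₀) x = (deriv φ x + ψ x) / 2 := by
    intro x
    simp only [fFn_deriv hφ hψn x₀, sub_neg_eq_add]
  have hgdd : ∀ x, deriv (deriv (fFn φ (fun s => -ψ s) x₀)) x
      = (deriv (deriv φ) x + deriv ψ x) / 2 := by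
    intro x
    rw [fFn_deriv_deriv hφ hψn x₀, deriv.fun_neg, sub_neg_eq_add]
  have hfs := fFn_sub (φ := φ) hψ x₀
  have hgs := gFn_sub (φ := φ) hψ x₀
  simp only [DomainFormulae]
  have hinit : ∀ x, fFn φ ψ x₀ x + gFn φ ψ x₀ x = φ x := by
    intro x
    simp only [fFn, gFn]
    ring
  rw [← gFn_eq] at hg hgd hgdd
  generalize fFn φ ψ x₀ = f at *
  generalize gFn φ ψ x₀ = g at *
  -- Conditions (I) close up the two modes at the characteristics through the slit ends.
  have J1 : f (a₂ - b₂ - ℓ) = f (a₁ - b₁ - ℓ) + (g (a₁ + b₁) - g (a₂ + b₂)) := by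
    have h1 := hfs (a₂ - b₂ - ℓ) (a₁ - b₁ - ℓ)
    have h2 := hgs (a₁ + b₁) (a₂ + b₂)
    rw [integral_symm] at h1 h2
    linarith
  have J2 : g (a₁ + b₁ + ℓ) + (f (a₁ - b₁) - f (a₂ - b₂)) = g (a₂ + b₂ + ℓ) := by
    have h1 := hgs (a₂ + b₂ + ℓ) (a₁ + b₁ + ℓ)
    have h2 := hfs (a₁ - b₁) (a₂ - b₂)
    linarith
  obtain ⟨F, hF, hF1, hF2, hF3, hF4, hF5⟩ := exists_mode hf
    (k₁ := a₂ - b₂ - ℓ) (k₂ := a₂ - b₂) (k₃ := a₁ - b₁ - ℓ) (k₄ := a₁ - b₁)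
    (s := -((a₂ - a₁) - (b₂ - b₁)))
    (A := g (a₁ + b₁) - g (a₂ + b₂)) (B := f (a₁ - b₁) - f (a₂ - b₂))
    (by linarith) (by linarith) (by linarith) (by ring) (by ring) J1 (by ring)
    (by rw [hfd, hfd]; linarith) (by rw [hfd, hfd]; linarith)
    (by rw [hfdd, hfdd]; linarith) (by rw [hfdd, hfdd]; linarith)
  obtain ⟨G, hG, hG1, hG2, hG3, hG4, hG5⟩ := exists_mode hg
    (k₁ := a₁ + b₁) (k₂ := a₁ + b₁ + ℓ) (k₃ := a₂ + b₂) (k₄ := a₂ + b₂ + ℓ)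
    (s := (a₂ - a₁) + (b₂ - b₁))
    (A := g (a₁ + b₁) - g (a₂ + b₂)) (B := f (a₁ - b₁) - f (a₂ - b₂))
    (by linarith) (by linarith) (by linarith) (by ring) (by ring) (by ring) J2
    (by rw [hgd, hgd]; linarith) (by rw [hgd, hgd]; linarith)
    (by rw [hgdd, hgdd]; linarith) (by rw [hgdd, hgdd]; linarith)
  obtain ⟨σ, hσ, hσ1, hσ2, hσb, hσm⟩ :=
    exists_interface (a₁ := a₁) (a₂ := a₂) (s := b₁ + ℓ) (e := b₂) ha (by linarith)
  -- Below the first slit (in particular across `t = 0`) the splice is the free d'Alembert wave.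
  have low : ∀ x t, a₁ - b₁ < x - t → x + t < a₁ + b₁ →
      (fun q : ℝ × ℝ => splice σ f F g G q.1 q.2) =ᶠ[𝓝 (x, t)]
        fun q => f (q.1 - q.2) + g (q.1 + q.2) := by
    intro x t h1 h2
    have := splice_eventually_diamond (σ := σ) (f := f) (F := F) (g := g) (G := G) (κ := 0)
      (m := a₁ - b₁) (M := x - t + 1) (n := x + t - 1) (N := a₁ + b₁) (x := x) (t := t)
      (fun y hy _ => by rw [hF5 y hy, add_zero]) (fun y _ hy => by rw [hG1 y hy, add_zero])
      h1 (by linarith) (by linarith) h2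
    simpa using this
  have axis : ∀ x, (fun q : ℝ × ℝ => splice σ f F g G q.1 q.2) =ᶠ[𝓝 (x, 0)]
        fun q => f (q.1 - q.2) + g (q.1 + q.2) := by
    intro x
    have hσ0 : σ 0 = a₁ := hσ1 0 (by linarith)
    rcases lt_trichotomy x a₁ with h | h | h
    · refine (splice_eventually_left hσ (by rw [hσ0]; exact h)).trans ?_
      have c : ContinuousAt (fun q : ℝ × ℝ => q.1 + q.2) (x, 0) := by fun_prop
      filter_upwards [c.eventually (Iio_mem_nhds (show x + 0 < a₁ + b₁ by linarith))] with q hq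
      rw [hG1 _ hq]
    · exact low x 0 (by linarith) (by linarith)
    · refine (splice_eventually_right hσ (by rw [hσ0]; exact h)).trans ?_
      have c : ContinuousAt (fun q : ℝ × ℝ => q.1 - q.2) (x, 0) := by fun_prop
      filter_upwards [c.eventually (Ioi_mem_nhds (show a₁ - b₁ < x - 0 by linarith))] with q hq
      rw [hF5 _ hq]
  have hw : ∀ p ∈ slitOmega a₁ a₂ b₁ b₂ ℓ, IsWaveAt (splice σ f F g G) p := by
    rintro ⟨x, t⟩ ⟨ht, hs⟩
    simp only [slit, mem_union, mem_ofPred_eq, mem_Icc, not_or, not_and, not_le] at ht hs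
    obtain ⟨hs1, hs2⟩ := hs
    rcases lt_trichotomy x (σ t) with h | h | h
    · exact ⟨f, G, hf, hG, splice_eventually_left hσ h⟩
    · by_cases t1 : t < b₁
      · have := hσ1 t (by linarith)
        exact ⟨f, g, hf, hg, low x t (by linarith) (by linarith)⟩
      by_cases t2 : t ≤ b₁ + ℓ
      · exact absurd (hs1 (by rw [h, hσ1 t t2]) (not_lt.1 t1)) (not_lt.2 t2)
      by_cases t3 : t < b₂
      · obtain ⟨m1, m2, m3, m4⟩ := hσm t (not_le.1 t2) t3
        refine ⟨f, fun y => g y + _, hf, hg.add contDiff_const,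
          splice_eventually_diamond hF3 hG3 ?_ ?_ ?_ ?_⟩ <;> linarith
      have hx : x = a₂ := by rw [h, hσ2 t (not_lt.1 t3)]
      have t4 := hs2 hx (not_lt.1 t3)
      refine ⟨f, fun y => g y + 0, hf, hg.add contDiff_const,
        splice_eventually_diamond (m := x - t - 1) (M := a₂ - b₂ - ℓ) (n := a₂ + b₂ + ℓ)
          (N := x + t + 1) (fun y _ hy => by rw [hF1 y hy, add_zero])
          (fun y hy _ => by rw [hG5 y hy, add_zero]) ?_ ?_ ?_ ?_⟩ <;> linarith
    · exact ⟨F, g, hF, hg, splice_eventually_right hσ h⟩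
  have hw0 : ∀ x, IsWaveAt (splice σ f F g G) (x, 0) := fun x => ⟨f, g, hf, hg, axis x⟩
  refine ⟨splice σ f F g G, ⟨?_, ?_, ?_, ?_, ?_, ?_⟩, ?_, ?_, ?_, ?_, ?_, ?_, ?_⟩
  · exact fun p hp => (hw p hp).contDiffAt.contDiffWithinAt
  · rintro ⟨x, t⟩ (hp | hp)
    · exact ((hw _ hp).contDiffAt.of_le (by norm_num)).contDiffWithinAt
    · have ht : t = 0 := hp
      subst ht
      exact ((hw0 x).contDiffAt.of_le (by norm_num)).contDiffWithinAt
  · exact fun p hp => (hw p hp).wave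
  · intro x
    have := (axis x).eq_of_nhds
    simp only [sub_zero, add_zero] at this
    rw [this, hinit]
  · intro x
    rw [uT_of_eventuallyEq ((contDiff_two_iff f).1 hf).1 ((contDiff_two_iff g).1 hg).1 (axis x),
      hfd, hgd, sub_zero, add_zero]
    ring
  · rintro t ⟨ht1, ht2⟩
    have s1 : σ t = a₁ := hσ1 t ht2.le
    have s2 : σ (t + (b₂ - b₁)) = a₂ := hσ2 _ (by linarith)
    have cf := hf.continuous
    have cg := hg.continuous
    have cF := hF.continuous
    have cG := hG.continuous
    refine ⟨⟨_, splice_tendsto_left cf cG s1, ?_⟩, ⟨_, splice_tendsto_right cF cg s1, ?_⟩,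
      ⟨_, uX_splice_tendsto_left hσ hf hG s1, ?_⟩, ⟨_, uX_splice_tendsto_right hσ hF hg s1, ?_⟩⟩
    · convert splice_tendsto_right cF cg s2 using 2
      rw [hG2 _ (by linarith) (by linarith), hF2 _ (by linarith) (by linarith)]
      ring_nf
    · convert splice_tendsto_left cf cG s2 using 2
      rw [hF4 _ (by linarith) (by linarith), hG4 _ (by linarith) (by linarith)]
      ring_nf
    · convert uX_splice_tendsto_right hσ hF hg s2 using 2
      rw [deriv_of_eq_shifted hG2 (by linarith) (by linarith),
        deriv_of_eq_shifted hF2 (by linarith) (by linarith)]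
      ring_nf
    · convert uX_splice_tendsto_left hσ hf hG s2 using 2
      -- `deriv_of_eq_shifted` expects the translation in the form `y + s`.
      simp only [sub_eq_add_neg _ (-((a₂ - a₁) - (b₂ - b₁))),
        sub_eq_add_neg _ ((a₂ - a₁) + (b₂ - b₁))] at hF4 hG4
      rw [deriv_of_eq_shifted hF4 (by linarith) (by linarith),
        deriv_of_eq_shifted hG4 (by linarith) (by linarith)]
      ring_nf
  -- The formulas: in each domain, first locate the point relative to the curve `x = σ t`.
  · intro x t h1 h2 h3
    have hx : σ t < x := by
      rcases le_or_gt t (b₁ + ℓ) with h | h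
      · rwa [hσ1 t h]
      rcases lt_or_ge t b₂ with h' | h'
      · linarith [hσm t h h']
      · linarith [hσ2 t h']
    rw [splice_right hx, hF4 _ (by linarith) (by linarith)]
    ring_nf
  · intro x t h1 h2 h3
    rw [splice_right ((hσb t).2.trans_lt h1), hF2 _ (by linarith) (by linarith)]
    ring_nf
  · intro x t h1 h2 h3
    rw [splice_left (h1.trans_le (hσb t).1), hG2 _ (by linarith) (by linarith)]
    ring_nf
  · intro x t h1 h2 h3
    have hx : x < σ t := by rw [hσ2 t (by linarith)]; exact h1
    rw [splice_left hx, hG4 _ (by linarith) (by linarith)]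
    ring_nf
  · intro x t h1 h2
    -- On the left of the curve but to the right of `a₁`, the point would lie above the first cone.
    by_cases hx : σ t < x
    · rw [abs_of_nonneg (by linarith [hσb t])] at h2
      rw [splice, if_pos hx, hF5 _ (by linarith)]
    · have hx' : x ≤ a₁ := by
        by_contra! hxa
        rw [abs_of_pos (by linarith)] at h2
        rcases le_or_gt t (b₁ + ℓ) with h | h
        · linarith [hσ1 t h]
        rcases lt_or_ge t b₂ with h' | h'
        · linarith [hσm t h h']
        · linarith [hσ2 t h']
      rw [abs_of_nonpos (by linarith)] at h2
      rw [splice, if_neg hx, hG1 _ (by linarith)]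
  · intro x t h1 h2
    have k1 := le_abs_self (x - a₁)
    have k2 := neg_abs_le (x - a₁)
    have k3 := abs_nonneg (x - a₁)
    by_cases hx : σ t < x
    · have : a₂ - b₂ < x - t := by
        rcases lt_or_ge t b₂ with h' | h'
        · linarith [hσm t (by linarith) h']
        · rw [abs_of_nonneg (by linarith [hσ2 t h'])] at h2
          linarith
      rw [splice, if_pos hx, hF3 _ this (by linarith)]
      ring
    · have : x + t < a₂ + b₂ := by
        rcases lt_or_ge t b₂ with h' | h'
        · linarith [hσm t (by linarith) h']
        · rw [abs_of_nonpos (by linarith [hσ2 t h'])] at h2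
          linarith
      rw [splice, if_neg hx, hG3 _ (by linarith) this]
      ring
  · intro x t h1
    have k1 := le_abs_self (x - a₂)
    have k2 := neg_abs_le (x - a₂)
    by_cases hx : σ t < x
    · rw [splice, if_pos hx, hF1 _ (by linarith)]
    · rw [splice, if_neg hx, hG5 _ (by linarith)]
end
end

section
/- Let f₁, g₁, f₄, g₄ : ℝ → ℝ be differentiable and suppose that for all t ∈ (b₁, b₁+ℓ): f₁(a₁−t) + g₁(a₁+t) = f₄(a₂−t−b) + g₄(a₂+t+b) and f₁′(a₁−t) + g₁′(a₁+t) = f₄′(a₂−t−b) + g₄′(a₂+t+b). Then g₁′(a₁+t) = g₄′(a₂+b+t) for all t ∈ (b₁, b₁+ℓ), and there exist constants K₁, K₂ with K₁ + K₂ = 0 such that f₄(a₂−b−t) = f₁(a₁−t) + K₁ and g₄(a₂+b+t) = g₁(a₁+t) + K₂ for all t ∈ (b₁, b₁+ℓ). -/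
/-!
Let `F t = f₄ (a₂ - b - t) - f₁ (a₁ - t)` and `G t = g₄ (a₂ + b + t) - g₁ (a₁ + t)`.
The first gluing identity says `F + G = 0` on the open interval, hence `F' + G' = 0` there.
Since `F` reverses the direction of its argument, the second gluing identity says `F' = G'`.
Thus `G' = 0`, so `G` is constant on the interval and `F` is the opposite constant.
-/

open Set Filter Topology

/-- The key gluing step in the proof of Theorem 3.1: if differentiable
`f₁, g₁, f₄, g₄` satisfy the two gluing identities along the slit, then the derivatives of the
left-moving parts agree, and the right- and left-moving parts agree up to opposite additive
constants. Here `b = b₂ − b₁`. -/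
theorem gluing_step (a₁ a₂ b₁ b₂ ℓ : ℝ) (hℓ : 0 < ℓ) (ha : a₁ < a₂)
    (f₁ g₁ f₄ g₄ : ℝ → ℝ)
    (hf₁ : Differentiable ℝ f₁) (hg₁ : Differentiable ℝ g₁)
    (hf₄ : Differentiable ℝ f₄) (hg₄ : Differentiable ℝ g₄)
    (hval : ∀ t ∈ Set.Ioo b₁ (b₁ + ℓ),
      f₁ (a₁ - t) + g₁ (a₁ + t) = f₄ (a₂ - t - (b₂ - b₁)) + g₄ (a₂ + t + (b₂ - b₁)))
    (hder : ∀ t ∈ Set.Ioo b₁ (b₁ + ℓ),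
      deriv f₁ (a₁ - t) + deriv g₁ (a₁ + t)
        = deriv f₄ (a₂ - t - (b₂ - b₁)) + deriv g₄ (a₂ + t + (b₂ - b₁))) :
    (∀ t ∈ Set.Ioo b₁ (b₁ + ℓ),
      deriv g₁ (a₁ + t) = deriv g₄ (a₂ + (b₂ - b₁) + t)) ∧
    ∃ K₁ K₂ : ℝ, K₁ + K₂ = 0 ∧ ∀ t ∈ Set.Ioo b₁ (b₁ + ℓ),
      f₄ (a₂ - (b₂ - b₁) - t) = f₁ (a₁ - t) + K₁ ∧
      g₄ (a₂ + (b₂ - b₁) + t) = g₁ (a₁ + t) + K₂ := by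
  have hG : ∀ t, HasDerivAt (fun s => g₄ (a₂ + (b₂ - b₁) + s) - g₁ (a₁ + s))
      (deriv g₄ (a₂ + (b₂ - b₁) + t) - deriv g₁ (a₁ + t)) t := fun t =>
    ((hg₄ _).hasDerivAt.comp_const_add _ t).sub ((hg₁ _).hasDerivAt.comp_const_add _ t)
  have hF : ∀ t, HasDerivAt (fun s => f₄ (a₂ - (b₂ - b₁) - s) - f₁ (a₁ - s))
      (-deriv f₄ (a₂ - (b₂ - b₁) - t) - -deriv f₁ (a₁ - t)) t := fun t =>
    ((hf₄ _).hasDerivAt.comp_const_sub _ t).sub ((hf₁ _).hasDerivAt.comp_const_sub _ t)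
  have e₁ : ∀ t, a₂ - t - (b₂ - b₁) = a₂ - (b₂ - b₁) - t := fun t => by ring
  have e₂ : ∀ t, a₂ + t + (b₂ - b₁) = a₂ + (b₂ - b₁) + t := fun t => by ring
  simp only [e₁, e₂] at hval hder
  have key : ∀ t ∈ Set.Ioo b₁ (b₁ + ℓ),
      deriv g₁ (a₁ + t) = deriv g₄ (a₂ + (b₂ - b₁) + t) := by
    intro t ht
    -- Openness of the interval allows the value identity to be differentiated at `t`.
    have h0 := ((hF t).add (hG t)).unique
      ((hasDerivAt_const t (0 : ℝ)).congr_of_eventuallyEq (by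
        filter_upwards [isOpen_Ioo.mem_nhds ht] with s hs
        have := hval s hs
        simp only [Pi.add_apply]
        linarith))
    linarith [hder t ht]
  refine ⟨key, ?_⟩
  obtain ⟨K, hK⟩ := isOpen_Ioo.exists_is_const_of_deriv_eq_zero
    (isPreconnected_Ioo (a := b₁) (b := b₁ + ℓ))
    (fun t _ => (hG t).differentiableAt.differentiableWithinAt)
    (fun t ht => by rw [(hG t).deriv, key t ht]; simp)
  refine ⟨-K, K, by ring, fun t ht => ?_⟩
  have h1 := hK t ht
  have h2 := hval t ht
  constructor <;> linarith
end

section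
/- Let a ∈ ℝ, δ > 0, T₀ < T₁, and let F be continuous on the open rectangle (a, a+δ) × (T₀−δ, T₁+δ). Suppose that for every t ∈ [T₀, T₁] the two-dimensional limit G(t) := lim_{(x,τ)→(a,t), x>a} F(x,τ) exists. Then G is continuous on [T₀, T₁]. -/
/-! The segment `{a} × [T₀, T₁]` lies in the closure of the open half-plane `{x > a}`. `G` is
therefore the restriction to this segment of the extension of `F` by its limits from the half-plane,
and such an extension is continuous wherever all the limits exist, the target `ℝ` being
regular (`continuousOn_extendFrom`). -/

open Set Filter Topology

/-- (Boundary-trace continuity lemma.) If `F` is continuous on the open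
rectangle `(a, a+δ) × (T₀−δ, T₁+δ)` and for every `t ∈ [T₀, T₁]` the two-dimensional limit
`G(t)` of `F(x,τ)` as `(x,τ) → (a,t)` with `x > a` exists, then `G` is continuous
on `[T₀, T₁]`. -/
theorem boundary_trace_continuous (a δ T₀ T₁ : ℝ) (hδ : 0 < δ) (hT : T₀ < T₁)
    (F : ℝ × ℝ → ℝ) (G : ℝ → ℝ)
    (hF : ContinuousOn F (Set.Ioo a (a + δ) ×ˢ Set.Ioo (T₀ - δ) (T₁ + δ)))
    (hG : ∀ t ∈ Set.Icc T₀ T₁,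
      Filter.Tendsto F (𝓝[{p : ℝ × ℝ | a < p.1}] (a, t)) (𝓝 (G t))) :
    ContinuousOn G (Set.Icc T₀ T₁) := by
  have hcl : ∀ t : ℝ, (a, t) ∈ closure {p : ℝ × ℝ | a < p.1} := by
    intro t
    have h : {p : ℝ × ℝ | a < p.1} = Set.Ioi a ×ˢ Set.univ := by ext; simp
    rw [h, closure_prod_eq, closure_Ioi]
    simp
  have hext : ContinuousOn (extendFrom {p : ℝ × ℝ | a < p.1} F)
      ((fun t : ℝ => (a, t)) '' Set.Icc T₀ T₁) := by
    apply continuousOn_extendFrom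
    · rintro _ ⟨t, -, rfl⟩
      exact hcl t
    · rintro _ ⟨t, ht, rfl⟩
      exact ⟨G t, hG t ht⟩
  have hcomp := hext.comp (f := fun t : ℝ => (a, t)) (by fun_prop)
    (Set.mapsTo_image _ (Set.Icc T₀ T₁))
  exact hcomp.congr fun t ht => (extendFrom_eq (hcl t) (hG t ht)).symm
end

section
/- Let ω : ℝ → ℝ be continuous and ν : ℝ → ℝ be continuously differentiable. Then for every t > 0: lim_{x→0⁺} U(x,t) = ½∫₀^t ω(τ) dτ − ½ν(t), lim_{x→0⁻} U(x,t) = ½∫₀^t ω(τ) dτ + ½ν(t), lim_{x→0⁺} U_x(x,t) = −½ω(t) + ½ν′(t), and lim_{x→0⁻} U_x(x,t) = ½ω(t) + ½ν′(t), where the limits of U_x are one-sided limits of the partial derivative ∂U/∂x, which exists for 0 < |x| < t. -/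
/-!
On each of the two sectors `0 < x < t` and `-t < x < 0` the Heaviside factor is `1` and `sign x` is a
constant `σ = ±1` with `|x| = σ x`. There `U(·, t)` coincides with the function
`x ↦ ½∫₀^{t - σx} ω - ½ σ ν(t - σx)` (`Ufun_eq_branch`), which is `C¹` on the whole line by the
fundamental theorem of calculus and the chain rule (`hasDerivAt_branch`). The sectors are open, so
`U_x` coincides there with the derivative of that function, and the one-sided limits are the values
at `x = 0` of continuous functions.
-/

open Set Filter Topology MeasureTheory intervalIntegral

noncomputable section

/-- The Heaviside step function: `θ(s) = 1` for `s > 0` and `θ(s) = 0` for `s ≤ 0`. -/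
def heav (s : ℝ) : ℝ := if 0 < s then 1 else 0

/-- `U(x,t) = θ(t−|x|)·(½∫₀^{t−|x|} ω(τ) dτ − ½ sign(x) ν(t−|x|))`. -/
def Ufun (ω ν : ℝ → ℝ) (x t : ℝ) : ℝ :=
  heav (t - |x|) *
    ((∫ τ in (0 : ℝ)..(t - |x|), ω τ) / 2 - Real.sign x * ν (t - |x|) / 2)

/-- The `C¹` function on `ℝ` that agrees with `U(·, t)` on the sector `0 < σ x < t`, for `σ = ±1`. -/
def branch (ω ν : ℝ → ℝ) (t σ x : ℝ) : ℝ :=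
  (∫ τ in (0 : ℝ)..(t - σ * x), ω τ) / 2 - σ * ν (t - σ * x) / 2

lemma Ufun_eq_branch (ω ν : ℝ → ℝ) {t σ x : ℝ} (hσ : σ = 1 ∨ σ = -1)
    (h0 : 0 < σ * x) (h1 : σ * x < t) : Ufun ω ν x t = branch ω ν t σ x := by
  have hx : |x| = σ * x ∧ Real.sign x = σ := by
    rcases hσ with rfl | rfl
    · have : 0 < x := by linarith
      simp [abs_of_pos this, Real.sign_of_pos this]
    · have : x < 0 := by linarith
      simp [abs_of_neg this, Real.sign_of_neg this]
  simp only [Ufun, branch, heav, hx.1, hx.2, if_pos (sub_pos.2 h1), one_mul]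

lemma hasDerivAt_branch {ω ν : ℝ → ℝ} (hω : Continuous ω) (hν : ContDiff ℝ 1 ν)
    (t : ℝ) {σ : ℝ} (hσ : σ = 1 ∨ σ = -1) (x : ℝ) :
    HasDerivAt (branch ω ν t σ) (-(σ * ω (t - σ * x)) / 2 + deriv ν (t - σ * x) / 2) x := by
  have hs : HasDerivAt (fun y : ℝ => t - σ * y) (-σ) x := by
    simpa using ((hasDerivAt_id x).const_mul σ).const_sub t
  have hI : HasDerivAt (fun y : ℝ => ∫ τ in (0 : ℝ)..(t - σ * y), ω τ)
      (ω (t - σ * x) * (-σ)) x :=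
    HasDerivAt.comp (h₂ := fun u => ∫ τ in (0 : ℝ)..u, ω τ) x
      (hω.integral_hasStrictDerivAt 0 (t - σ * x)).hasDerivAt hs
  have hN : HasDerivAt (fun y : ℝ => ν (t - σ * y)) (deriv ν (t - σ * x) * (-σ)) x :=
    ((hν.differentiable one_ne_zero) (t - σ * x)).hasDerivAt.comp x hs
  refine ((hI.div_const 2).sub ((hN.const_mul σ).div_const 2)).congr_deriv ?_
  rcases hσ with rfl | rfl <;> ring

lemma hasDerivAt_Ufun {ω ν : ℝ → ℝ} (hω : Continuous ω) (hν : ContDiff ℝ 1 ν)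
    {t σ x : ℝ} (hσ : σ = 1 ∨ σ = -1) (h0 : 0 < σ * x) (h1 : σ * x < t) :
    HasDerivAt (fun y => Ufun ω ν y t)
      (-(σ * ω (t - σ * x)) / 2 + deriv ν (t - σ * x) / 2) x := by
  refine (hasDerivAt_branch hω hν t hσ x).congr_of_eventuallyEq ?_
  have hc : ContinuousAt (fun y : ℝ => σ * y) x := by fun_prop
  filter_upwards [hc.eventually_const_lt h0, hc.eventually_lt_const h1] with y hy0 hy1
  exact Ufun_eq_branch ω ν hσ hy0 hy1

/-- Limits of `U` and `U_x` at `0` along any filter that eventually stays in the sector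
`0 < σ x < t`; both one-sided limits are instances. -/
lemma tendsto_Ufun_and_deriv {ω ν : ℝ → ℝ} (hω : Continuous ω) (hν : ContDiff ℝ 1 ν)
    {t σ : ℝ} (hσ : σ = 1 ∨ σ = -1) {l : Filter ℝ} (hl : l ≤ 𝓝 0)
    (hs : ∀ᶠ x in l, 0 < σ * x ∧ σ * x < t) :
    Tendsto (fun x => Ufun ω ν x t) l (𝓝 ((∫ τ in (0 : ℝ)..t, ω τ) / 2 - σ * ν t / 2)) ∧
    Tendsto (fun x => deriv (fun y => Ufun ω ν y t) x) l
      (𝓝 (-(σ * ω t) / 2 + deriv ν t / 2)) := by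
  constructor
  · have h := (hasDerivAt_branch hω hν t hσ 0).continuousAt.tendsto.mono_left hl
    simp only [branch, mul_zero, sub_zero] at h
    refine h.congr' ?_
    filter_upwards [hs] with x hx
    exact (Ufun_eq_branch ω ν hσ hx.1 hx.2).symm
  · have hd : Continuous (deriv ν) := hν.continuous_deriv le_rfl
    have hc : Continuous fun x : ℝ =>
        -(σ * ω (t - σ * x)) / 2 + deriv ν (t - σ * x) / 2 := by fun_prop
    have h := (hc.tendsto 0).mono_left hl
    simp only [mul_zero, sub_zero] at h
    refine h.congr' ?_
    filter_upwards [hs] with x hx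
    exact (hasDerivAt_Ufun hω hν hσ hx.1 hx.2).deriv.symm

/-- One-sided limits of `U` and `U_x` at `x = 0` for `t > 0`:
`U(±0, t) = ½∫₀^t ω ∓ ½ν(t)` and `U_x(±0, t) = ∓½ω(t) + ½ν′(t)`, where the partial
derivative `∂U/∂x` exists for `0 < |x| < t`. -/
theorem Ufun_one_sided_limits (ω ν : ℝ → ℝ)
    (hω : Continuous ω) (hν : ContDiff ℝ 1 ν) (t : ℝ) (ht : 0 < t) :
    Filter.Tendsto (fun x => Ufun ω ν x t) (𝓝[>] (0 : ℝ))
      (𝓝 ((∫ τ in (0 : ℝ)..t, ω τ) / 2 - ν t / 2)) ∧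
    Filter.Tendsto (fun x => Ufun ω ν x t) (𝓝[<] (0 : ℝ))
      (𝓝 ((∫ τ in (0 : ℝ)..t, ω τ) / 2 + ν t / 2)) ∧
    (∀ x : ℝ, 0 < |x| → |x| < t → DifferentiableAt ℝ (fun y => Ufun ω ν y t) x) ∧
    Filter.Tendsto (fun x => deriv (fun y => Ufun ω ν y t) x) (𝓝[>] (0 : ℝ))
      (𝓝 (-(ω t) / 2 + deriv ν t / 2)) ∧
    Filter.Tendsto (fun x => deriv (fun y => Ufun ω ν y t) x) (𝓝[<] (0 : ℝ))
      (𝓝 (ω t / 2 + deriv ν t / 2)) := by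
  have hR : ∀ᶠ x in 𝓝[>] (0 : ℝ), 0 < 1 * x ∧ 1 * x < t := by
    filter_upwards [Ioo_mem_nhdsGT ht] with x hx
    simpa using hx
  have hL : ∀ᶠ x in 𝓝[<] (0 : ℝ), 0 < -1 * x ∧ -1 * x < t := by
    filter_upwards [Ioo_mem_nhdsLT (neg_lt_zero.2 ht)] with x hx
    constructor <;> linarith [hx.1, hx.2]
  obtain ⟨hR1, hR2⟩ := tendsto_Ufun_and_deriv hω hν (Or.inl rfl) nhdsWithin_le_nhds hR
  obtain ⟨hL1, hL2⟩ := tendsto_Ufun_and_deriv hω hν (Or.inr rfl) nhdsWithin_le_nhds hL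
  refine ⟨?_, ?_, fun x hx0 hxt => ?_, ?_, ?_⟩
  · convert hR1 using 2; ring
  · convert hL1 using 2; ring
  · rcases (abs_pos.1 hx0).lt_or_gt with hx | hx
    · rw [abs_of_neg hx] at hxt
      exact (hasDerivAt_Ufun (σ := -1) hω hν (Or.inr rfl)
        (by linarith) (by linarith)).differentiableAt
    · rw [abs_of_pos hx] at hxt
      exact (hasDerivAt_Ufun (σ := 1) hω hν (Or.inl rfl)
        (by linarith) (by linarith)).differentiableAt
  · convert hR2 using 2; ring
  · convert hL2 using 2; ring
end
end

section
/- Let ℓ > 0 and let D₁ : ℝ → ℝ be continuously differentiable. There exists a continuous function ω : ℝ → ℝ vanishing outside [0,ℓ] such that ∫₀^t ω(τ) dτ = ½∫₀^ℓ ω(τ) dτ + D₁(t) for all t ∈ [0,ℓ] if and only if D₁(0) + D₁(ℓ) = 0 and D₁′(0) = D₁′(ℓ) = 0. In that case ω is unique and satisfies ω(t) = D₁′(t) for all t ∈ [0,ℓ]. -/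
/-!
Differentiating the equation on `[0, ℓ]` gives `ω = D₁′` there (`eq_deriv_of_equation`): one-sided
derivatives within the closed interval are unique, so the endpoints are included. Continuity and
vanishing outside `[0, ℓ]` force `ω` to vanish at `0` and `ℓ`, hence `D₁′(0) = D₁′(ℓ) = 0`, and the
equation at `t = 0` and `t = ℓ` gives `D₁(0) = -½∫₀^ℓ ω = -D₁(ℓ)`. Conversely, when
`D₁′(0) = D₁′(ℓ) = 0`, extending `D₁′|[0, ℓ]` by constants is the same as extending it by zero, so
the extension is continuous, and the fundamental theorem of calculus reduces the equation to
`D₁(0) + D₁(ℓ) = 0`.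
-/

open Set Filter Topology MeasureTheory intervalIntegral

noncomputable section

/-- The constant `c` is arbitrary: the term `½∫₀^ℓ ω` enters only through being independent of `t`,
so it disappears on differentiating. -/
lemma eq_deriv_of_equation {ℓ : ℝ} (hℓ : 0 < ℓ) {D ω : ℝ → ℝ} (hD : Differentiable ℝ D)
    (hω : Continuous ω) {c : ℝ}
    (h : ∀ t ∈ Set.Icc (0 : ℝ) ℓ, (∫ τ in (0 : ℝ)..t, ω τ) = c + D t) :
    ∀ t ∈ Set.Icc (0 : ℝ) ℓ, ω t = deriv D t := by
  intro t ht
  have h1 : HasDerivWithinAt (fun t => ∫ τ in (0 : ℝ)..t, ω τ) (ω t) (Set.Icc 0 ℓ) t :=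
    (hω.integral_hasStrictDerivAt 0 t).hasDerivAt.hasDerivWithinAt
  have h2 : HasDerivWithinAt (fun t => ∫ τ in (0 : ℝ)..t, ω τ) (deriv D t) (Set.Icc 0 ℓ) t :=
    (((hD t).hasDerivAt.const_add c).hasDerivWithinAt).congr h (h t ht)
  exact (uniqueDiffOn_Icc hℓ t ht).eq_deriv _ h1 h2

lemma endpoints_eq_zero {ℓ : ℝ} {ω : ℝ → ℝ} (hω : Continuous ω)
    (h0 : ∀ t : ℝ, t ∉ Set.Icc (0 : ℝ) ℓ → ω t = 0) : ω 0 = 0 ∧ ω ℓ = 0 := by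
  have hc : IsClosed {t | ω t = 0} := isClosed_eq hω continuous_const
  constructor
  · have hs : Set.Iio (0 : ℝ) ⊆ {t | ω t = 0} := fun t ht => h0 t fun h => not_lt.2 h.1 ht
    have := closure_minimal hs hc
    rw [closure_Iio] at this
    exact this (Set.mem_Iic.2 le_rfl)
  · have hs : Set.Ioi ℓ ⊆ {t | ω t = 0} := fun t ht => h0 t fun h => not_lt.2 h.2 ht
    have := closure_minimal hs hc
    rw [closure_Ioi] at this
    exact this (Set.mem_Ici.2 le_rfl)

/-- Solvability of the integral equation (35) for the jump `ω`:
a continuous `ω` vanishing outside `[0, ℓ]` with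
`∫₀^t ω = ½∫₀^ℓ ω + D₁(t)` on `[0, ℓ]` exists iff `D₁(0) + D₁(ℓ) = 0` and
`D₁′(0) = D₁′(ℓ) = 0`; in that case `ω` is unique and `ω = D₁′` on `[0, ℓ]`. -/
theorem omega_equation_solvability (ℓ : ℝ) (hℓ : 0 < ℓ)
    (D₁ : ℝ → ℝ) (hD₁ : ContDiff ℝ 1 D₁) :
    ((∃ ω : ℝ → ℝ, Continuous ω ∧ (∀ t : ℝ, t ∉ Set.Icc (0 : ℝ) ℓ → ω t = 0) ∧
        ∀ t ∈ Set.Icc (0 : ℝ) ℓ,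
          (∫ τ in (0 : ℝ)..t, ω τ) = (∫ τ in (0 : ℝ)..ℓ, ω τ) / 2 + D₁ t) ↔
      (D₁ 0 + D₁ ℓ = 0 ∧ deriv D₁ 0 = 0 ∧ deriv D₁ ℓ = 0)) ∧
    (∀ ω : ℝ → ℝ, Continuous ω → (∀ t : ℝ, t ∉ Set.Icc (0 : ℝ) ℓ → ω t = 0) →
      (∀ t ∈ Set.Icc (0 : ℝ) ℓ,
        (∫ τ in (0 : ℝ)..t, ω τ) = (∫ τ in (0 : ℝ)..ℓ, ω τ) / 2 + D₁ t) →
      ∀ t ∈ Set.Icc (0 : ℝ) ℓ, ω t = deriv D₁ t) ∧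
    (∀ ω ω' : ℝ → ℝ, Continuous ω → (∀ t : ℝ, t ∉ Set.Icc (0 : ℝ) ℓ → ω t = 0) →
      (∀ t ∈ Set.Icc (0 : ℝ) ℓ,
        (∫ τ in (0 : ℝ)..t, ω τ) = (∫ τ in (0 : ℝ)..ℓ, ω τ) / 2 + D₁ t) →
      Continuous ω' → (∀ t : ℝ, t ∉ Set.Icc (0 : ℝ) ℓ → ω' t = 0) →
      (∀ t ∈ Set.Icc (0 : ℝ) ℓ,
        (∫ τ in (0 : ℝ)..t, ω' τ) = (∫ τ in (0 : ℝ)..ℓ, ω' τ) / 2 + D₁ t) →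
      ω = ω') := by
  have hdiff : Differentiable ℝ D₁ := hD₁.differentiable one_ne_zero
  have hderiv : Continuous (deriv D₁) := hD₁.continuous_deriv le_rfl
  refine ⟨⟨?_, ?_⟩, ?_, ?_⟩
  · rintro ⟨ω, hω, h0, h⟩
    have hm0 : (0 : ℝ) ∈ Set.Icc (0 : ℝ) ℓ := ⟨le_rfl, hℓ.le⟩
    have hmℓ : ℓ ∈ Set.Icc (0 : ℝ) ℓ := ⟨hℓ.le, le_rfl⟩
    have hd := eq_deriv_of_equation hℓ hdiff hω h
    obtain ⟨e0, eℓ⟩ := endpoints_eq_zero hω h0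
    refine ⟨?_, (hd 0 hm0).symm.trans e0, (hd ℓ hmℓ).symm.trans eℓ⟩
    have a := h 0 hm0
    have b := h ℓ hmℓ
    rw [integral_same] at a
    linarith
  · rintro ⟨hsum, d0, dℓ⟩
    -- Clamping the argument to `[0, ℓ]` makes continuity automatic; the values outside are
    -- the endpoint values of `D₁′`, which are zero.
    have hint : ∀ t ∈ Set.Icc (0 : ℝ) ℓ,
        (∫ τ in (0 : ℝ)..t, deriv D₁ (max 0 (min ℓ τ))) = D₁ t - D₁ 0 := by
      intro t ht
      rw [← integral_deriv_eq_sub (fun x _ => hdiff x) (hderiv.intervalIntegrable 0 t)]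
      refine integral_congr fun τ hτ => ?_
      rw [Set.uIcc_of_le ht.1] at hτ
      simp only [min_eq_right (hτ.2.trans ht.2), max_eq_right hτ.1]
    refine ⟨fun t => deriv D₁ (max 0 (min ℓ t)), by fun_prop, ?_, ?_⟩
    · intro t ht
      rcases lt_or_ge t 0 with h | h
      · simpa only [min_eq_right (h.le.trans hℓ.le), max_eq_left h.le] using d0
      · have h' : ℓ < t := not_le.1 fun h' => ht ⟨h, h'⟩
        simpa only [min_eq_left h'.le, max_eq_right hℓ.le] using dℓ
    · intro t ht
      rw [hint t ht, hint ℓ ⟨hℓ.le, le_rfl⟩]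
      linarith
  · intro ω hω _ h
    exact eq_deriv_of_equation hℓ hdiff hω h
  · intro ω ω' hω h0 h hω' h0' h'
    funext t
    by_cases ht : t ∈ Set.Icc (0 : ℝ) ℓ
    · rw [eq_deriv_of_equation hℓ hdiff hω h t ht, eq_deriv_of_equation hℓ hdiff hω' h' t ht]
    · rw [h0 t ht, h0' t ht]
end
end

section
/- Let φ ∈ C²(ℝ) and ψ ∈ C¹(ℝ). Then conditions (S) hold if and only if conditions (I) and (II) hold. -/
/-!
With `Ψ(x) = ∫₀ˣ ψ`, the d'Alembert solution splits into travelling waves,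
`u^D(x,t) = ½ (F(x+t) + G(x-t))`, where `F = φ + Ψ` and `G = φ - Ψ`. Put
`p(t) = F(d₂+t) - F(d₁+t)` and `q(t) = G(c₂-t) - G(c₁-t)`. Then `D₁ = ½ (p + q)` and
`D₂ = ½ (p' - q')` (lemmas `D1fun_eq` and `D2fun_eq`), so

* the vanishing of `D₁'`, `D₂`, `D₁''`, `D₂'` at `0` and `ℓ` says that `p', q', p'', q''` vanish
  there, which is (II);
* `D₁(0) + D₁(ℓ) = 0` and `∫₀^ℓ D₂ = 0` say that `p(0) + q(0) + p(ℓ) + q(ℓ) = 0` and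
  `p(ℓ) - p(0) = q(ℓ) - q(0)`, that is `p(ℓ) = -q(0)` and `q(ℓ) = -p(0)`, which is (I).
-/

open Set Filter Topology MeasureTheory intervalIntegral

noncomputable section

/-- The d'Alembert solution `u^D(x,t) = ½(φ(x+t) + φ(x−t)) + ½∫_{x−t}^{x+t} ψ`. -/
def uD (φ ψ : ℝ → ℝ) (x t : ℝ) : ℝ :=
  (φ (x + t) + φ (x - t)) / 2 + (∫ s in (x - t)..(x + t), ψ s) / 2

/-- `D₁(t) = u^D(a₂, b₂+t) − u^D(a₁, b₁+t)`. -/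
def D1fun (φ ψ : ℝ → ℝ) (a₁ a₂ b₁ b₂ : ℝ) (t : ℝ) : ℝ :=
  uD φ ψ a₂ (b₂ + t) - uD φ ψ a₁ (b₁ + t)

/-- `D₂(t) = u^D_x(a₂, b₂+t) − u^D_x(a₁, b₁+t)`. -/
def D2fun (φ ψ : ℝ → ℝ) (a₁ a₂ b₁ b₂ : ℝ) (t : ℝ) : ℝ :=
  uX (uD φ ψ) a₂ (b₂ + t) - uX (uD φ ψ) a₁ (b₁ + t)

/-- Conditions (S) on the initial data. -/
def CondS (a₁ a₂ b₁ b₂ ℓ : ℝ) (φ ψ : ℝ → ℝ) : Prop :=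
  deriv (D1fun φ ψ a₁ a₂ b₁ b₂) 0 = 0 ∧ deriv (D1fun φ ψ a₁ a₂ b₁ b₂) ℓ = 0 ∧
  D1fun φ ψ a₁ a₂ b₁ b₂ 0 + D1fun φ ψ a₁ a₂ b₁ b₂ ℓ = 0 ∧
  deriv (deriv (D1fun φ ψ a₁ a₂ b₁ b₂)) 0 = 0 ∧
  deriv (deriv (D1fun φ ψ a₁ a₂ b₁ b₂)) ℓ = 0 ∧
  (∫ τ in (0 : ℝ)..ℓ, D2fun φ ψ a₁ a₂ b₁ b₂ τ) = 0 ∧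
  D2fun φ ψ a₁ a₂ b₁ b₂ 0 = 0 ∧ D2fun φ ψ a₁ a₂ b₁ b₂ ℓ = 0 ∧
  deriv (D2fun φ ψ a₁ a₂ b₁ b₂) 0 = 0 ∧ deriv (D2fun φ ψ a₁ a₂ b₁ b₂) ℓ = 0

/-- The left-travelling wave profile `F = φ + ∫₀ ψ`. The right-travelling profile
`G = φ - ∫₀ ψ` is `waveF φ (-ψ)`. -/
def waveF (φ ψ : ℝ → ℝ) (x : ℝ) : ℝ := φ x + ∫ s in (0 : ℝ)..x, ψ s

theorem waveF_sub {φ ψ : ℝ → ℝ} (hψ : Continuous ψ) (x y : ℝ) :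
    waveF φ ψ x - waveF φ ψ y = φ x - φ y + ∫ s in y..x, ψ s := by
  have := integral_interval_sub_left (hψ.intervalIntegrable (μ := volume) 0 x)
    (hψ.intervalIntegrable 0 y)
  unfold waveF
  linarith

theorem waveF_neg_sub {φ ψ : ℝ → ℝ} (hψ : Continuous ψ) (x y : ℝ) :
    waveF φ (-ψ) x - waveF φ (-ψ) y = φ x - φ y + ∫ s in x..y, ψ s := by
  rw [waveF_sub hψ.neg, integral_symm x y]
  simp

theorem hasDerivAt_waveF {φ ψ : ℝ → ℝ} (hφ : Differentiable ℝ φ) (hψ : Continuous ψ) (x : ℝ) :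
    HasDerivAt (waveF φ ψ) (deriv φ x + ψ x) x :=
  (hφ x).hasDerivAt.add (hψ.integral_hasStrictDerivAt 0 x).hasDerivAt

theorem uD_eq {φ ψ : ℝ → ℝ} (hψ : Continuous ψ) (x t : ℝ) :
    uD φ ψ x t = (waveF φ ψ (x + t) + waveF φ (-ψ) (x - t)) / 2 := by
  have := integral_interval_sub_left (hψ.intervalIntegrable (μ := volume) 0 (x + t))
    (hψ.intervalIntegrable 0 (x - t))
  unfold uD waveF
  rw [← this]
  simp only [Pi.neg_apply, intervalIntegral.integral_neg]
  ring

theorem uX_uD_eq {φ ψ : ℝ → ℝ} (hφ : Differentiable ℝ φ) (hψ : Continuous ψ) (x t : ℝ) :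
    uX (uD φ ψ) x t
      = (deriv φ (x + t) + ψ (x + t) + (deriv φ (x - t) - ψ (x - t))) / 2 := by
  unfold uX
  simp only [uD_eq hψ]
  have h1 := (hasDerivAt_waveF hφ hψ (x + t)).comp_add_const x t
  have h2 := (hasDerivAt_waveF hφ hψ.neg (x - t)).comp_sub_const x t
  refine ((h1.add h2).div_const 2).deriv.trans ?_
  simp only [Pi.neg_apply]
  ring

/-- The jump `p(t) = f(d₂+t) - f(d₁+t)` of a left-travelling profile `f`. -/
def jumpP (f : ℝ → ℝ) (d₁ d₂ t : ℝ) : ℝ := f (d₂ + t) - f (d₁ + t)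

/-- The jump `q(t) = f(c₂-t) - f(c₁-t)` of a right-travelling profile `f`. -/
def jumpQ (f : ℝ → ℝ) (c₁ c₂ t : ℝ) : ℝ := f (c₂ - t) - f (c₁ - t)

theorem hasDerivAt_jumpP {f f' : ℝ → ℝ} (h : ∀ x, HasDerivAt f (f' x) x) (d₁ d₂ t : ℝ) :
    HasDerivAt (jumpP f d₁ d₂) (jumpP f' d₁ d₂ t) t :=
  ((h (d₂ + t)).comp_const_add d₂ t).sub ((h (d₁ + t)).comp_const_add d₁ t)

theorem hasDerivAt_jumpQ {f f' : ℝ → ℝ} (h : ∀ x, HasDerivAt f (f' x) x) (c₁ c₂ t : ℝ) :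
    HasDerivAt (jumpQ f c₁ c₂) (-jumpQ f' c₁ c₂ t) t := by
  refine (((h (c₂ - t)).comp_const_sub c₂ t).sub
    ((h (c₁ - t)).comp_const_sub c₁ t)).congr_deriv ?_
  unfold jumpQ
  ring

theorem D1fun_eq {φ ψ : ℝ → ℝ} (hψ : Continuous ψ) (a₁ a₂ b₁ b₂ : ℝ) :
    D1fun φ ψ a₁ a₂ b₁ b₂ = fun t =>
      (jumpP (waveF φ ψ) (a₁ + b₁) (a₂ + b₂) t
        + jumpQ (waveF φ (-ψ)) (a₁ - b₁) (a₂ - b₂) t) / 2 := by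
  funext t
  simp only [D1fun, uD_eq hψ, jumpP, jumpQ, add_assoc, sub_sub]
  ring

theorem D2fun_eq {φ ψ : ℝ → ℝ} (hφ : Differentiable ℝ φ) (hψ : Continuous ψ)
    (a₁ a₂ b₁ b₂ : ℝ) :
    D2fun φ ψ a₁ a₂ b₁ b₂ = fun t =>
      (jumpP (deriv φ + ψ) (a₁ + b₁) (a₂ + b₂) t
        + jumpQ (deriv φ - ψ) (a₁ - b₁) (a₂ - b₂) t) / 2 := by
  funext t
  simp only [D2fun, uX_uD_eq hφ hψ, jumpP, jumpQ, add_assoc, sub_sub, Pi.add_apply, Pi.sub_apply]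
  ring

/-- For `φ ∈ C²(ℝ)` and `ψ ∈ C¹(ℝ)`, conditions (S) hold if and only if
conditions (I) and (II) hold. -/
theorem condS_iff_condI_condII (a₁ a₂ b₁ b₂ ℓ : ℝ)
    (hℓ : 0 < ℓ) (hb₁ : 0 < b₁) (ha : a₁ < a₂) (hb : b₁ + ℓ + a₂ - a₁ < b₂)
    (φ ψ : ℝ → ℝ) (hφ : ContDiff ℝ 2 φ) (hψ : ContDiff ℝ 1 ψ) :
    CondS a₁ a₂ b₁ b₂ ℓ φ ψ ↔ (CondI a₁ a₂ b₁ b₂ ℓ φ ψ ∧ CondII a₁ a₂ b₁ b₂ ℓ φ ψ) := by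
  have hφ1 : Differentiable ℝ φ := hφ.differentiable (by norm_num)
  have hφ' : ContDiff ℝ 1 (deriv φ) := by
    have h : ContDiff ℝ (1 + 1) φ := by simpa [one_add_one_eq_two] using hφ
    exact (contDiff_succ_iff_deriv.1 h).2.2
  have hφ2 : Differentiable ℝ (deriv φ) := hφ'.differentiable (by norm_num)
  have hψ1 : Differentiable ℝ ψ := hψ.differentiable (by norm_num)
  have hF : ∀ x, HasDerivAt (waveF φ ψ) ((deriv φ + ψ) x) x :=
    hasDerivAt_waveF hφ1 hψ.continuous
  have hG : ∀ x, HasDerivAt (waveF φ (-ψ)) ((deriv φ - ψ) x) x := fun x => by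
    simpa [sub_eq_add_neg] using hasDerivAt_waveF hφ1 hψ.continuous.neg x
  have hF' : ∀ x, HasDerivAt (deriv φ + ψ) ((deriv (deriv φ) + deriv ψ) x) x := fun x =>
    (hφ2 x).hasDerivAt.add (hψ1 x).hasDerivAt
  have hG' : ∀ x, HasDerivAt (deriv φ - ψ) ((deriv (deriv φ) - deriv ψ) x) x := fun x =>
    (hφ2 x).hasDerivAt.sub (hψ1 x).hasDerivAt
  have hD1' : deriv (D1fun φ ψ a₁ a₂ b₁ b₂) = fun t =>
      (jumpP (deriv φ + ψ) (a₁ + b₁) (a₂ + b₂) t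
        - jumpQ (deriv φ - ψ) (a₁ - b₁) (a₂ - b₂) t) / 2 := by
    rw [D1fun_eq hψ.continuous]
    funext t
    exact (((hasDerivAt_jumpP hF _ _ t).add (hasDerivAt_jumpQ hG _ _ t)).div_const 2).deriv
  have hD1'' : deriv (deriv (D1fun φ ψ a₁ a₂ b₁ b₂)) = fun t =>
      (jumpP (deriv (deriv φ) + deriv ψ) (a₁ + b₁) (a₂ + b₂) t
        + jumpQ (deriv (deriv φ) - deriv ψ) (a₁ - b₁) (a₂ - b₂) t) / 2 := by
    rw [hD1']
    funext t
    exact (((hasDerivAt_jumpP hF' _ _ t).sub (hasDerivAt_jumpQ hG' _ _ t)).div_const 2).deriv.trans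
      (by rw [sub_neg_eq_add])
  have hD2' : deriv (D2fun φ ψ a₁ a₂ b₁ b₂) = fun t =>
      (jumpP (deriv (deriv φ) + deriv ψ) (a₁ + b₁) (a₂ + b₂) t
        - jumpQ (deriv (deriv φ) - deriv ψ) (a₁ - b₁) (a₂ - b₂) t) / 2 := by
    rw [D2fun_eq hφ1 hψ.continuous]
    funext t
    exact (((hasDerivAt_jumpP hF' _ _ t).add (hasDerivAt_jumpQ hG' _ _ t)).div_const 2).deriv
  -- `D₂ = ½ (p' - q')`, so its integral is a difference of boundary values of `½ (p - q)`.
  have hint : (∫ τ in (0 : ℝ)..ℓ, D2fun φ ψ a₁ a₂ b₁ b₂ τ) =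
      (jumpP (waveF φ ψ) (a₁ + b₁) (a₂ + b₂) ℓ
        - jumpQ (waveF φ (-ψ)) (a₁ - b₁) (a₂ - b₂) ℓ) / 2 -
      (jumpP (waveF φ ψ) (a₁ + b₁) (a₂ + b₂) 0
        - jumpQ (waveF φ (-ψ)) (a₁ - b₁) (a₂ - b₂) 0) / 2 := by
    have hcont : Continuous (D2fun φ ψ a₁ a₂ b₁ b₂) := by
      have h1 : Continuous (deriv φ) := hφ2.continuous
      have h2 : Continuous ψ := hψ.continuous
      rw [D2fun_eq hφ1 h2]
      simp only [jumpP, jumpQ, Pi.add_apply, Pi.sub_apply]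
      fun_prop
    refine integral_eq_sub_of_hasDerivAt (f := fun t =>
      (jumpP (waveF φ ψ) (a₁ + b₁) (a₂ + b₂) t
        - jumpQ (waveF φ (-ψ)) (a₁ - b₁) (a₂ - b₂) t) / 2) (fun t _ => ?_)
      (hcont.intervalIntegrable _ _)
    refine (((hasDerivAt_jumpP hF _ _ t).sub (hasDerivAt_jumpQ hG _ _ t)).div_const 2).congr_deriv ?_
    rw [D2fun_eq hφ1 hψ.continuous, sub_neg_eq_add]
  have e1 := waveF_neg_sub (φ := φ) hψ.continuous (a₂ - b₂ - ℓ) (a₁ - b₁ - ℓ)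
  have e2 := waveF_sub (φ := φ) hψ.continuous (a₂ + b₂) (a₁ + b₁)
  have e3 := waveF_sub (φ := φ) hψ.continuous (a₂ + b₂ + ℓ) (a₁ + b₁ + ℓ)
  have e4 := waveF_neg_sub (φ := φ) hψ.continuous (a₂ - b₂) (a₁ - b₁)
  unfold CondS CondI CondII
  rw [hint, hD1'', hD1', hD2', D2fun_eq hφ1 hψ.continuous, D1fun_eq hψ.continuous]
  simp only [jumpP, jumpQ, add_zero, sub_zero, Pi.add_apply, Pi.sub_apply]
  -- What remains is linear algebra in the values of `p`, `q` and their derivatives at `0` and `ℓ`.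
  constructor
  · rintro ⟨h1, h2, h3, h4, h5, h6, h7, h8, h9, h10⟩
    refine ⟨⟨?_, ?_⟩, ?_, ?_, ?_, ?_, ?_, ?_, ?_, ?_⟩ <;> linarith
  · rintro ⟨⟨i1, i2⟩, h1, h2, h3, h4, h5, h6, h7, h8⟩
    refine ⟨?_, ?_, ?_, ?_, ?_, ?_, ?_, ?_, ?_, ?_⟩ <;> linarith
end
end
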